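/- Let A be a commutative ring, V an A-module, and (F^q)_{q∈ℤ} a family of A-submodules of V. Regard W = A[x,x⁻¹] ⊗_A V as a module over the polynomial ring A[x] via the inclusion A[x] ⊆ A[x,x⁻¹], and let Rees(F) ⊆ W be the A[x]-submodule generated by all elements x^q ⊗ v with q ∈ ℤ and v ∈ F^q. For an A-linear functional α : V → A and an integer p, let α̃_p : W → A[x,x⁻¹] be the A[x,x⁻¹]-linear map determined by f ⊗ v ↦ x^p · f · α(v). Then α̃_p maps Rees(F) into the subring A[x] if and only if F^q ⊆ ker α for every integer q < −p. -/

import Mathlib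

open Polynomial LaurentPolynomial TensorProduct

/-- The algebra maps `A → A[x] → A[x,x⁻¹]` form a scalar tower. -/
instance laurentTower (A : Type*) [CommRing A] :
    IsScalarTower A (Polynomial A) (LaurentPolynomial A) :=
  IsScalarTower.of_algebraMap_eq fun c => by
    simp [algebraMap_eq_toLaurent, Polynomial.algebraMap_apply]

/-!
An `A[x]`-linear map carries a span into the submodule `A[x] ⊆ A[x,x⁻¹]` exactly when it does so
on generators, and `α̃_p` sends the generator `x^q ⊗ v` to the monomial `α v * x^(p+q)`. This
monomial is a polynomial precisely when `p + q` is nonnegative or its coefficient `α v` vanishes.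
-/

theorem C_mul_T_mem_range_toLaurent_iff {R : Type*} [Semiring R] {r : R} {n : ℤ} :
    LaurentPolynomial.C r * T n ∈ Set.range (toLaurent : R[X] →+* R[T;T⁻¹]) ↔
      (n < 0 → r = 0) := by
  constructor
  · rintro ⟨f, hf⟩ hn
    have hf_zero : f = 0 := by
      rw [← trunc_toLaurent f, hf, trunc_C_mul_T, if_neg hn.not_ge]
    have h_single : (.single n r : R[T;T⁻¹]) = 0 := by
      rw [single_eq_C_mul_T, ← hf, hf_zero, map_zero]
    exact AddMonoidAlgebra.single_eq_zero.mp h_single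
  · intro hr
    rcases lt_or_ge n 0 with hn | hn
    · exact ⟨0, by simp [hr hn]⟩
    · lift n to ℕ using hn
      exact ⟨Polynomial.C r * X ^ n, toLaurent_C_mul_X_pow n r⟩

section Rees

variable {A V : Type*} [CommSemiring A] [AddCommMonoid V] [Module A V]

/-- The Rees module of a family `F` of submodules of `V`, realised inside `A[x,x⁻¹] ⊗ V`. It is
`⊕_q x^q F^q` for an increasing filtration; as `F` need not be monotone here, closure under
multiplication by `x` is forced by taking the `A[x]`-span. -/
noncomputable def reesSubmodule (F : ℤ → Submodule A V) : Submodule A[X] (A[T;T⁻¹] ⊗[A] V) :=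
  Submodule.span A[X] {w | ∃ q : ℤ, ∃ v ∈ F q, w = T q ⊗ₜ[A] v}

theorem reesSubmodule_le_iff {F : ℤ → Submodule A V} {N : Submodule A[X] (A[T;T⁻¹] ⊗[A] V)} :
    reesSubmodule F ≤ N ↔ ∀ q, ∀ v ∈ F q, T q ⊗ₜ[A] v ∈ N := by
  rw [reesSubmodule, Submodule.span_le]
  constructor
  · intro h q v hv
    exact h ⟨q, v, hv, rfl⟩
  · rintro h _ ⟨q, v, hv, rfl⟩
    exact h q v hv

theorem rees_dual_filtration_general (F : ℤ → Submodule A V) (α : V →ₗ[A] A) (p : ℤ)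
    (αt : (A[T;T⁻¹] ⊗[A] V) →ₗ[A[T;T⁻¹]] A[T;T⁻¹])
    (hαt : ∀ (f : A[T;T⁻¹]) (v : V), αt (f ⊗ₜ[A] v) = T p * f * algebraMap A A[T;T⁻¹] (α v)) :
    (∀ w ∈ reesSubmodule F, αt w ∈ Set.range (toLaurent : A[X] →+* A[T;T⁻¹])) ↔
      ∀ q : ℤ, q < -p → F q ≤ LinearMap.ker α := by
  have hαt_T (q : ℤ) (v : V) :
      αt (T q ⊗ₜ[A] v) = LaurentPolynomial.C (α v) * T (p + q) := by
    rw [hαt, ← T_add, T_mul, LaurentPolynomial.C_eq_algebraMap]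
  let polynomials : Submodule A[X] A[T;T⁻¹] := LinearMap.range (Algebra.linearMap A[X] A[T;T⁻¹])
  calc
    _ ↔ reesSubmodule F ≤ polynomials.comap (αt.restrictScalars A[X]) := Iff.rfl
    _ ↔ ∀ q, ∀ v ∈ F q, αt (T q ⊗ₜ[A] v) ∈ Set.range (toLaurent : A[X] →+* A[T;T⁻¹]) :=
      reesSubmodule_le_iff
    _ ↔ ∀ q, ∀ v ∈ F q, p + q < 0 → α v = 0 := by
      simp only [hαt_T, C_mul_T_mem_range_toLaurent_iff]
    _ ↔ ∀ q : ℤ, q < -p → F q ≤ LinearMap.ker α := by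
      simp only [← lt_neg_iff_add_neg', SetLike.le_def, LinearMap.mem_ker]
      exact forall_congr' fun _ => ⟨fun h hq v hv => h v hv hq, fun h v hv hq => h hq hv⟩

end Rees

/-- Let `A` be a commutative ring, `V` an `A`-module and
`(F q)_{q ∈ ℤ}` a family of submodules of `V`.  Let `W = A[x,x⁻¹] ⊗[A] V`, regarded
as an `A[x]`-module, and let `Rees ⊆ W` be the `A[x]`-submodule generated by the
elements `x^q ⊗ v` with `v ∈ F q`.  For an `A`-linear functional `α : V → A` and
`p ∈ ℤ`, let `αt : W → A[x,x⁻¹]` be the `A[x,x⁻¹]`-linear map determined by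
`f ⊗ v ↦ x^p * f * α v`.  Then `αt` maps `Rees` into (the image of) `A[x]` iff
`F q ⊆ ker α` for every integer `q < -p`. -/
theorem rees_dual_filtration
    (A : Type*) [CommRing A] (V : Type*) [AddCommGroup V] [Module A V]
    (F : ℤ → Submodule A V)
    (α : V →ₗ[A] A) (p : ℤ)
    (αt : (LaurentPolynomial A ⊗[A] V) →ₗ[LaurentPolynomial A] LaurentPolynomial A)
    (hαt : ∀ (f : LaurentPolynomial A) (v : V),
      αt (f ⊗ₜ[A] v) = LaurentPolynomial.T p * f * algebraMap A (LaurentPolynomial A) (α v))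
    (Rees : Submodule (Polynomial A) (LaurentPolynomial A ⊗[A] V))
    (hRees : Rees = Submodule.span (Polynomial A)
      { w : LaurentPolynomial A ⊗[A] V |
        ∃ q : ℤ, ∃ v ∈ F q, w = LaurentPolynomial.T q ⊗ₜ[A] v }) :
    (∀ w ∈ Rees, αt w ∈
        Set.range (Polynomial.toLaurent : Polynomial A →+* LaurentPolynomial A)) ↔
      (∀ q : ℤ, q < -p → F q ≤ LinearMap.ker α) := by
  subst hRees
  exact rees_dual_filtration_general F α p αt hαt
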